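/- arXiv:2301.03332 — 2 statements merged into one kernel-verified Lean document; each statement's English description precedes it below -/
import Mathlib

section
/- (Moment-zero condition for minimizers, Lemma 3.3.) Let 2 ≤ p < 2Q/(Q-2) and let u : ℝ^m × ℝ^n → ℝ be a positive smooth function with 0 < ∫ |∇_G u|² dx dt < ∞ and ∫ u^p U^{2Q/(Q-2)−p} dx dt = 1, which minimizes the quotient F_p(v) = (∫ |∇_G v|² dx dt) / (∫ |v|^p U^{2Q/(Q-2)−p} dx dt)^{2/p} among all smooth v with finite nonzero ∫ |∇_G v|² dx dt and finite nonzero ∫ |v|^p U^{2Q/(Q-2)−p} dx dt. Then for each i = 1,…,m+n+1 one has ∫ u^p · U^{2Q/(Q-2)−p} · ω_i dx dt = 0. -/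
/-!
The energy `∫ |∇_G u|²` is unchanged, up to an explicit scaling factor, when `u` is composed with
a left translation of the H-type group or with a dilation `(x, t) ↦ (e^s x, e^{2s} t)`. Let `Φ_s`
be such a one-parameter group. Testing the minimality of `u` against `u ∘ Φ_{-s}` and changing
variables in the weighted `L^p` mass moves the flow from `u` onto the weight, and the scaling
factors cancel in the quotient `F_p`. What remains is

  `I(s) = ∫ u^p (e^{-2κs} D ∘ Φ_s)^{-β} ≤ 1 = I(0)`,

where `U = D^{-(Q-2)/4}`, `β = (Q-2)/4 · (2Q/(Q-2) - p) > 0`, and `κ` is `0` for translations and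
`1` for dilations. So `dI/ds = 0` at `s = 0`. Differentiating under the integral is legitimate because
`∂_s log (D ∘ Φ_s)` is bounded, which also gives a domination of the integrand by a multiple of
the one at `s = 0`; the integrability at `s = 0` is forced by the constraint
`∫ u^p U^{2Q/(Q-2)-p} = 1`. The result, `ConformalFlow.moment`, is
`∫ u^p U^{2Q/(Q-2)-p} (W / D - 2κ) = 0` with `W = ∂_s|_{s=0} D ∘ Φ_s`.

The function `W / D - 2κ` is `ω_j` for the translation generated by the `j`-th horizontal
direction, `ω_{m+r}` for the translation along `t_r`, and `-2 ω_{m+n+1}` for the dilations, which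
accounts for all the required moments.
-/

open MeasureTheory Real Filter Matrix

noncomputable section

abbrev Pt (m n : ℕ) := (Fin m → ℝ) × (Fin n → ℝ)

def IsHType (m n : ℕ) (A : Fin n → Matrix (Fin m) (Fin m) ℝ) : Prop :=
  (∀ k, (A k)ᵀ = -(A k)) ∧ (∀ k, A k * (A k)ᵀ = 1) ∧
    ∀ i j, i ≠ j → A i * A j + A j * A i = 0

def Qh (m n : ℕ) : ℝ := m + 2 * n

def Xvf (m n : ℕ) (A : Fin n → Matrix (Fin m) (Fin m) ℝ) (j : Fin m)
    (u : Pt m n → ℝ) (p : Pt m n) : ℝ :=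
  fderiv ℝ u p (Pi.single j 1, 0)
    + (1/2) * ∑ k : Fin n, (∑ i : Fin m, A k i j * p.1 i) * fderiv ℝ u p (0, Pi.single k 1)

def gradSq (m n : ℕ) (A : Fin n → Matrix (Fin m) (Fin m) ℝ)
    (u : Pt m n → ℝ) (p : Pt m n) : ℝ :=
  ∑ j : Fin m, (Xvf m n A j u p) ^ 2

def subLap (m n : ℕ) (A : Fin n → Matrix (Fin m) (Fin m) ℝ)
    (u : Pt m n → ℝ) (p : Pt m n) : ℝ :=
  ∑ j : Fin m, Xvf m n A j (Xvf m n A j u) p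

def Uf (m n : ℕ) (p : Pt m n) : ℝ :=
  ((1 + (∑ i, p.1 i ^ 2) / 4) ^ 2 + ∑ r, p.2 r ^ 2) ^ (-(Qh m n - 2) / 4)

def Sconst (m n : ℕ) : ℝ :=
  (4 : ℝ) ^ (-(2 * (n : ℝ)) / Qh m n) * ((m : ℝ) * (Qh m n - 2)) *
    π ^ (((m : ℝ) + n) / Qh m n) *
    (Real.Gamma (((m : ℝ) + n) / 2) / Real.Gamma ((m : ℝ) + n)) ^ ((2 : ℝ) / Qh m n)


/-- `ω_j`, `j = 1,…,m`. -/
def om1 (m n : ℕ) (A : Fin n → Matrix (Fin m) (Fin m) ℝ) (j : Fin m) (p : Pt m n) : ℝ :=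
  Uf m n p ^ (4 / (Qh m n - 2)) *
    ((1 + (∑ i, p.1 i ^ 2) / 4) * p.1 j
      + ∑ r : Fin n, ∑ i : Fin m, p.2 r * p.1 i * A r j i)

/-- `ω_{m+r}`, `r = 1,…,n`. -/
def om2 (m n : ℕ) (r : Fin n) (p : Pt m n) : ℝ :=
  2 * Uf m n p ^ (4 / (Qh m n - 2)) * p.2 r

/-- `ω_{m+n+1}`. -/
def om3 (m n : ℕ) (p : Pt m n) : ℝ :=
  Uf m n p ^ (4 / (Qh m n - 2)) * (1 - (∑ i, p.1 i ^ 2) ^ 2 / 16 - ∑ r, p.2 r ^ 2)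


/-! ### First variation along a conformal flow -/

/-- The function `D = (1 + |x|²/4)² + |t|²`, so that `U = D ^ (-(Q-2)/4)`. -/
def Dn (m n : ℕ) (q : Pt m n) : ℝ :=
  (1 + (∑ i, q.1 i ^ 2) / 4) ^ 2 + ∑ r, q.2 r ^ 2

/-- A one-parameter group `Φ` of diffeomorphisms of `ℝ^m × ℝ^n` that scales the horizontal
gradient by `e^{κ s}` and Lebesgue measure (pushed forward) by `e^{-Qκ s}`, together with the
derivative `W` of `D` along the flow, assumed to be `O(D)`. Only the parts of the group law
that the argument needs are recorded. Left translations have `κ = 0`, dilations `κ = 1`. -/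
structure ConformalFlow (m n : ℕ) (A : Fin n → Matrix (Fin m) (Fin m) ℝ) where
  κ : ℝ
  Φ : ℝ → Pt m n → Pt m n
  W : Pt m n → ℝ
  C : ℝ
  smooth : ∀ s, ContDiff ℝ (⊤ : ℕ∞) (Φ s)
  zero : ∀ q, Φ 0 q = q
  inv : ∀ s q, Φ s (Φ (-s) q) = q
  map : ∀ s, Measure.map (Φ s) volume =
    ENNReal.ofReal (Real.exp (-(Qh m n * κ * s))) • (volume : Measure (Pt m n))
  grad : ∀ (u : Pt m n → ℝ), ContDiff ℝ (⊤ : ℕ∞) u → ∀ s q,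
    gradSq m n A (fun y => u (Φ s y)) q = Real.exp (2 * κ * s) * gradSq m n A u (Φ s q)
  deriv : ∀ s q, HasDerivAt (fun s => Dn m n (Φ s q)) (W (Φ s q)) s
  cont : Continuous W
  bound : ∀ q, |W q| ≤ C * Dn m n q

lemma one_le_Dn (m n : ℕ) (q : Pt m n) : 1 ≤ Dn m n q := by
  have h1 : 0 ≤ ∑ i, q.1 i ^ 2 := Finset.sum_nonneg fun _ _ => sq_nonneg _
  have h2 : 0 ≤ ∑ r, q.2 r ^ 2 := Finset.sum_nonneg fun _ _ => sq_nonneg _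
  unfold Dn
  nlinarith

lemma continuous_Dn (m n : ℕ) : Continuous (Dn m n) := by
  unfold Dn
  fun_prop

lemma Uf_rpow (m n : ℕ) (q : Pt m n) (e : ℝ) :
    Uf m n q ^ e = Real.exp (-((Qh m n - 2) / 4 * e * Real.log (Dn m n q))) := by
  have h : 0 < Dn m n q := by linarith [one_le_Dn m n q]
  change (Dn m n q ^ (-(Qh m n - 2) / 4)) ^ e = _
  rw [← Real.rpow_mul h.le, Real.rpow_def_of_pos h]
  congr 1
  ring

lemma Uf_rpow_four (m n : ℕ) (hQ : 2 < Qh m n) (q : Pt m n) :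
    Uf m n q ^ (4 / (Qh m n - 2)) = (Dn m n q)⁻¹ := by
  have h : 0 < Dn m n q := by linarith [one_le_Dn m n q]
  have hQ' : Qh m n - 2 ≠ 0 := by linarith
  rw [Uf_rpow, show (Qh m n - 2) / 4 * (4 / (Qh m n - 2)) = 1 by field_simp, one_mul,
    Real.exp_neg, Real.exp_log h]

namespace ConformalFlow

variable {m n : ℕ} {A : Fin n → Matrix (Fin m) (Fin m) ℝ}

lemma measurableEmbedding (F : ConformalFlow m n A) (s : ℝ) :
    MeasurableEmbedding (F.Φ s) :=
  (Homeomorph.mk ⟨F.Φ s, F.Φ (-s), fun q => by simpa using F.inv (-s) q, F.inv s⟩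
    (F.smooth s).continuous (F.smooth (-s)).continuous).measurableEmbedding

lemma integral_comp (F : ConformalFlow m n A) (s : ℝ) (f : Pt m n → ℝ) :
    ∫ q, f (F.Φ s q) = Real.exp (-(Qh m n * F.κ * s)) * ∫ q, f q := by
  rw [← (F.measurableEmbedding s).integral_map, F.map, integral_smul_measure,
    ENNReal.toReal_ofReal (Real.exp_nonneg _), smul_eq_mul]

lemma integrable_comp (F : ConformalFlow m n A) (s : ℝ) {f : Pt m n → ℝ} (hf : Integrable f) :
    Integrable (fun q => f (F.Φ s q)) := by
  have := (F.measurableEmbedding s).integrable_map_iff (μ := volume) (g := f)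
  refine this.1 ?_
  rw [F.map]
  exact hf.smul_measure ENNReal.ofReal_ne_top

/-- The scale-corrected logarithm of `D` along the flow. -/
def L (F : ConformalFlow m n A) (s : ℝ) (q : Pt m n) : ℝ :=
  Real.log (Dn m n (F.Φ s q)) - 2 * F.κ * s

lemma hasDerivAt_L (F : ConformalFlow m n A) (s : ℝ) (q : Pt m n) :
    HasDerivAt (fun s => F.L s q) (F.W (F.Φ s q) / Dn m n (F.Φ s q) - 2 * F.κ) s := by
  have h : Dn m n (F.Φ s q) ≠ 0 := by linarith [one_le_Dn m n (F.Φ s q)]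
  have h2 := ((F.deriv s q).log h).sub ((hasDerivAt_id s).const_mul (2 * F.κ))
  rw [mul_one] at h2
  exact h2

lemma abs_deriv_L_le (F : ConformalFlow m n A) (q : Pt m n) :
    |F.W q / Dn m n q - 2 * F.κ| ≤ F.C + |2 * F.κ| := by
  have h : 0 < Dn m n q := by linarith [one_le_Dn m n q]
  refine (abs_sub _ _).trans ?_
  gcongr
  rw [abs_div, abs_of_pos h, div_le_iff₀ h]
  exact F.bound q

lemma abs_L_sub_le (F : ConformalFlow m n A) (s : ℝ) (q : Pt m n) :
    |F.L s q - F.L 0 q| ≤ (F.C + |2 * F.κ|) * |s| := by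
  have := convex_univ.norm_image_sub_le_of_norm_hasDerivWithin_le (x := 0) (y := s)
    (fun x _ => (F.hasDerivAt_L x q).hasDerivWithinAt)
    (fun x _ => F.abs_deriv_L_le (F.Φ x q)) (Set.mem_univ _) (Set.mem_univ _)
  simpa using this

lemma continuous_L (F : ConformalFlow m n A) (s : ℝ) : Continuous (F.L s) := by
  unfold L
  refine Continuous.sub ?_ continuous_const
  exact ((continuous_Dn m n).comp (F.smooth s).continuous).log
    fun q => (zero_lt_one.trans_le (one_le_Dn m n (F.Φ s q))).ne'

/-- First variation: if `u` minimizes the quotient `F_p`, then `s = 0` maximizes the weighted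
mass `I(s)` of the transported function, and the integral below is a nonzero multiple of `dI/ds` at `0`. -/
theorem moment (F : ConformalFlow m n A) (hQ : 2 < Qh m n)
    (p : ℝ) (hp1 : 2 ≤ p) (hp2 : p < 2 * Qh m n / (Qh m n - 2))
    (u : Pt m n → ℝ) (hu : ContDiff ℝ (⊤ : ℕ∞) u) (hpos : ∀ q : Pt m n, 0 < u q)
    (hint : Integrable (fun q : Pt m n => gradSq m n A u q))
    (hgrad : 0 < ∫ q : Pt m n, gradSq m n A u q)
    (hconstr : ∫ q : Pt m n,
        u q ^ p * Uf m n q ^ (2 * Qh m n / (Qh m n - 2) - p) = 1)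
    (hmin : ∀ v : Pt m n → ℝ, ContDiff ℝ (⊤ : ℕ∞) v →
      Integrable (fun q : Pt m n => gradSq m n A v q) →
      (∫ q : Pt m n, gradSq m n A v q) ≠ 0 →
      Integrable (fun q : Pt m n =>
        |v q| ^ p * Uf m n q ^ (2 * Qh m n / (Qh m n - 2) - p)) →
      (∫ q : Pt m n, |v q| ^ p * Uf m n q ^ (2 * Qh m n / (Qh m n - 2) - p)) ≠ 0 →
      (∫ q : Pt m n, gradSq m n A u q) /
          (∫ q : Pt m n, u q ^ p * Uf m n q ^ (2 * Qh m n / (Qh m n - 2) - p)) ^ (2 / p)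
        ≤ (∫ q : Pt m n, gradSq m n A v q) /
            (∫ q : Pt m n,
              |v q| ^ p * Uf m n q ^ (2 * Qh m n / (Qh m n - 2) - p)) ^ (2 / p)) :
    ∫ q : Pt m n, u q ^ p * Uf m n q ^ (2 * Qh m n / (Qh m n - 2) - p) *
      (F.W q / Dn m n q - 2 * F.κ) = 0 := by
  rw [hconstr, Real.one_rpow, div_one] at hmin
  set e := 2 * Qh m n / (Qh m n - 2) - p with he
  have he0 : 0 < e := by simpa [he] using hp2
  set β := (Qh m n - 2) / 4 * e with hβ
  have hβ0 : 0 < β := by rw [hβ]; have : 0 < Qh m n - 2 := by linarith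
                         positivity
  -- the exponents balance exactly because `Q - 2β = p (Q - 2) / 2`
  have hbal : Qh m n - 2 * β = p * (Qh m n - 2) / 2 := by
    have : Qh m n - 2 ≠ 0 := by linarith
    rw [hβ, he]; field_simp; ring
  set G := ∫ q : Pt m n, gradSq m n A u q with hG
  set K := F.C + |2 * F.κ| with hK
  have hK0 : 0 ≤ K := (abs_nonneg _).trans (F.abs_deriv_L_le 0)
  let f : ℝ → Pt m n → ℝ := fun s q => u q ^ p * Real.exp (-(β * F.L s q))
  have hf0 : ∀ q, f 0 q = u q ^ p * Uf m n q ^ e := fun q => by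
    simp [f, L, F.zero, Uf_rpow, hβ]
  have hfpos : ∀ s q, 0 < f s q := fun s q =>
    mul_pos (Real.rpow_pos_of_pos (hpos q) _) (Real.exp_pos _)
  have hfc : ∀ s, Continuous (f s) := fun s =>
    (hu.continuous.rpow_const fun q => Or.inl (hpos q).ne').mul
      (Real.continuous_exp.comp ((F.continuous_L s).const_mul β).neg)
  have hfle : ∀ s q, |s| ≤ 1 → f s q ≤ Real.exp (β * K) * f 0 q := fun s q hs => by
    have h1 := (abs_le.1 (F.abs_L_sub_le s q)).1
    have h2 : K * |s| ≤ K := mul_le_of_le_one_right hK0 hs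
    have h3 : Real.exp (-(β * F.L s q)) ≤ Real.exp (β * K) * Real.exp (-(β * F.L 0 q)) := by
      rw [← Real.exp_add, Real.exp_le_exp]
      nlinarith
    calc f s q ≤ u q ^ p * (Real.exp (β * K) * Real.exp (-(β * F.L 0 q))) :=
          mul_le_mul_of_nonneg_left h3 (Real.rpow_nonneg (hpos q).le _)
      _ = _ := by simp only [f]; ring
  have hI0 : ∫ q, f 0 q = 1 := by simp_rw [hf0]; exact hconstr
  have hint0 : Integrable (f 0) := by
    by_contra h
    rw [integral_undef h] at hI0
    exact zero_ne_one hI0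
  have hints : ∀ s, |s| ≤ 1 → Integrable (f s) := fun s hs =>
    (hint0.const_mul (Real.exp (β * K))).mono' (hfc s).aestronglyMeasurable
      (Eventually.of_forall fun q => by
        rw [Real.norm_eq_abs, abs_of_pos (hfpos s q)]; exact hfle s q hs)
  have hIpos : ∀ s, |s| ≤ 1 → 0 < ∫ q, f s q := fun s hs => by
    rw [integral_pos_iff_support_of_nonneg (fun q => (hfpos s q).le) (hints s hs),
      show Function.support (f s) = Set.univ from
        Set.eq_univ_of_forall fun q => (hfpos s q).ne']
    exact Measure.measure_univ_pos.2 (NeZero.ne _)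
  -- minimality, tested against `u ∘ Φ (-s)`
  have hIle : ∀ s, |s| ≤ 1 → ∫ q, f s q ≤ 1 := by
    intro s hs
    let v : Pt m n → ℝ := fun q => u (F.Φ (-s) q)
    have hv : ContDiff ℝ (⊤ : ℕ∞) v := hu.comp (F.smooth (-s))
    have hgv : (fun q => gradSq m n A v q) =
        fun q => Real.exp (2 * F.κ * -s) * gradSq m n A u (F.Φ (-s) q) :=
      funext fun q => F.grad u hu (-s) q
    have hGv : ∫ q, gradSq m n A v q = Real.exp ((Qh m n - 2) * F.κ * s) * G := by
      rw [hgv, integral_const_mul, F.integral_comp (-s) (fun q => gradSq m n A u q),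
        ← mul_assoc, ← Real.exp_add]
      congr 2; ring
    have hmv : (fun q => |v q| ^ p * Uf m n q ^ e) =
        fun q => Real.exp (-(2 * β * F.κ * s)) * f s (F.Φ (-s) q) := by
      funext q
      simp only [v, f, L, F.inv, abs_of_pos (hpos _), Uf_rpow, ← hβ]
      rw [mul_left_comm, ← Real.exp_add]
      congr 2; ring
    have hMv : ∫ q, |v q| ^ p * Uf m n q ^ e =
        Real.exp ((Qh m n - 2 * β) * F.κ * s) * ∫ q, f s q := by
      rw [hmv, integral_const_mul, F.integral_comp (-s) (f s), ← mul_assoc, ← Real.exp_add]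
      congr 2; ring
    have key := hmin v hv
      (by rw [hgv]; exact (F.integrable_comp (-s) hint).const_mul _)
      (by rw [hGv]; positivity)
      (by rw [hmv]; exact (F.integrable_comp (-s) (hints s hs)).const_mul _)
      (by rw [hMv]; exact (mul_pos (Real.exp_pos _) (hIpos s hs)).ne')
    have hI := hIpos s hs
    rw [hGv, hMv, Real.mul_rpow (Real.exp_nonneg _) hI.le, ← Real.exp_mul, hbal,
      show p * (Qh m n - 2) / 2 * F.κ * s * (2 / p) = (Qh m n - 2) * F.κ * s by
        have : p ≠ 0 := by linarith
        field_simp,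
      mul_div_mul_left _ _ (Real.exp_ne_zero _), le_div_iff₀ (Real.rpow_pos_of_pos hI _)] at key
    by_contra! hlt
    have := Real.one_lt_rpow hlt (show 0 < 2 / p by have : 0 < p := by linarith
                                                    positivity)
    nlinarith
  have hder := (hasDerivAt_integral_of_dominated_loc_of_deriv_le (μ := volume) (F := f)
    (x₀ := (0 : ℝ)) (s := Metric.ball 0 1)
    (F' := fun s q => f s q * (-(β * (F.W (F.Φ s q) / Dn m n (F.Φ s q) - 2 * F.κ))))
    (bound := fun q => Real.exp (β * K) * f 0 q * (β * K))
    (Metric.ball_mem_nhds _ one_pos)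
    (Eventually.of_forall fun s => (hfc s).aestronglyMeasurable) hint0
    (by
      refine Continuous.aestronglyMeasurable ?_
      simp only [F.zero]
      exact (hfc 0).mul (((F.cont.div (continuous_Dn m n)
        fun q => by linarith [one_le_Dn m n q]).sub continuous_const).const_mul β).neg)
    (Eventually.of_forall fun q s hs => by
      have hs' : |s| ≤ 1 := by simpa using (mem_ball_zero_iff.1 hs).le
      rw [norm_mul, Real.norm_eq_abs, Real.norm_eq_abs, abs_of_pos (hfpos s q), abs_neg,
        abs_mul, abs_of_pos hβ0]
      have h0 := hfpos 0 q
      have h2 := hfle s q hs'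
      have h3 := F.abs_deriv_L_le (F.Φ s q)
      gcongr)
    ((hint0.const_mul _).mul_const _)
    (Eventually.of_forall fun q s hs => by
      have h := (((F.hasDerivAt_L s q).const_mul β).neg.exp).const_mul (u q ^ p)
      exact h.congr_deriv (by simp only [f, Pi.neg_apply]; ring))).2
  have hmax : IsLocalMax (fun s => ∫ q, f s q) 0 := by
    filter_upwards [Metric.ball_mem_nhds (0 : ℝ) one_pos] with s hs
    rw [hI0]
    exact hIle s (by simpa using (mem_ball_zero_iff.1 hs).le)
  have h0 := hmax.hasDerivAt_eq_zero hder
  simp only [F.zero, hf0] at h0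
  rw [show (fun q => u q ^ p * Uf m n q ^ e * (-(β * (F.W q / Dn m n q - 2 * F.κ)))) =
    fun q => (-β) * (u q ^ p * Uf m n q ^ e * (F.W q / Dn m n q - 2 * F.κ)) from
      funext fun q => by ring, integral_const_mul] at h0
  exact (mul_eq_zero.1 h0).resolve_left (neg_ne_zero.2 hβ0.ne')

end ConformalFlow

/-! ### Left translations and dilations -/

section Flows

variable {m n : ℕ}

/-- Chain rule for `D` along a curve given in coordinates. -/
lemma hasDerivAt_Dn {x : ℝ → Fin m → ℝ} {t : ℝ → Fin n → ℝ} {x' : Fin m → ℝ}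
    {t' : Fin n → ℝ} {s : ℝ} (hx : ∀ i, HasDerivAt (fun s => x s i) (x' i) s)
    (ht : ∀ k, HasDerivAt (fun s => t s k) (t' k) s) :
    HasDerivAt (fun s => Dn m n (x s, t s))
      ((1 + (∑ i, x s i ^ 2) / 4) * (∑ i, x s i * x' i) + ∑ k, 2 * t s k * t' k) s := by
  have h1 : HasDerivAt (fun s => ∑ i, x s i ^ 2) (∑ i, 2 * x s i * x' i) s :=
    HasDerivAt.fun_sum fun i _ => ((hx i).pow 2).congr_deriv (by simp)
  have h2 : HasDerivAt (fun s => ∑ k, t s k ^ 2) (∑ k, 2 * t s k * t' k) s :=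
    HasDerivAt.fun_sum fun i _ => ((ht i).pow 2).congr_deriv (by simp)
  have h := (((h1.div_const 4).const_add 1).pow 2).add h2
  refine h.congr_deriv ?_
  simp only [mul_assoc, ← Finset.mul_sum]
  push_cast
  ring

/-- Second component of the left translation by `a`: `½ ⟨a, A_k x⟩`. -/
def shear (A : Fin n → Matrix (Fin m) (Fin m) ℝ) (a : Fin m → ℝ) (x : Fin m → ℝ) :
    Fin n → ℝ :=
  fun k => (1 / 2) * ∑ j, ∑ i, a j * A k j i * x i

lemma shear_self {A : Fin n → Matrix (Fin m) (Fin m) ℝ} (hA : ∀ k, (A k)ᵀ = -(A k))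
    (a : Fin m → ℝ) : shear A a a = 0 := by
  funext k
  have h : ∑ j, ∑ i, a j * A k j i * a i = -∑ j, ∑ i, a j * A k j i * a i := by
    conv_lhs => rw [Finset.sum_comm]
    simp only [← Finset.sum_neg_distrib]
    refine Finset.sum_congr rfl fun j _ => Finset.sum_congr rfl fun i _ => ?_
    have := congrFun (congrFun (hA k) j) i
    simp only [Matrix.transpose_apply, Matrix.neg_apply] at this
    rw [this]; ring
  simp only [shear, Pi.zero_apply]
  linarith

lemma shear_add (A : Fin n → Matrix (Fin m) (Fin m) ℝ) (a x y : Fin m → ℝ) :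
    shear A a (x + y) = shear A a x + shear A a y := by
  funext k
  simp [shear, mul_add, Finset.sum_add_distrib]

lemma shear_smul (A : Fin n → Matrix (Fin m) (Fin m) ℝ) (a x : Fin m → ℝ) (c : ℝ) :
    shear A a (c • x) = c • shear A a x := by
  funext k
  simp only [shear, Pi.smul_apply, smul_eq_mul, Finset.mul_sum]
  refine Finset.sum_congr rfl fun j _ => Finset.sum_congr rfl fun i _ => ?_
  ring

lemma shear_single (A : Fin n → Matrix (Fin m) (Fin m) ℝ) (a : Fin m → ℝ) (i : Fin m)
    (k : Fin n) : shear A a (Pi.single i 1) k = (1 / 2) * ∑ j, a j * A k j i := by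
  simp [shear, Pi.single_apply]

/-- `shear` as a linear map. -/
def shearL (A : Fin n → Matrix (Fin m) (Fin m) ℝ) (a : Fin m → ℝ) :
    (Fin m → ℝ) →L[ℝ] (Fin n → ℝ) :=
  LinearMap.toContinuousLinearMap
    { toFun := shear A a
      map_add' := shear_add A a
      map_smul' := fun c x => shear_smul A a x c }

lemma shearL_apply (A : Fin n → Matrix (Fin m) (Fin m) ℝ) (a x : Fin m → ℝ) :
    shearL A a x = shear A a x := rfl

/-- The flow `(x, t) ↦ (x + s a, t + s (b + ½ ⟨a, A x⟩))`. -/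
def leftTrans (A : Fin n → Matrix (Fin m) (Fin m) ℝ) (a : Fin m → ℝ) (b : Fin n → ℝ) (s : ℝ)
    (q : Pt m n) : Pt m n :=
  (q.1 + s • a, q.2 + s • (b + shearL A a q.1))

lemma contDiff_leftTrans (A : Fin n → Matrix (Fin m) (Fin m) ℝ) (a : Fin m → ℝ) (b : Fin n → ℝ)
    (s : ℝ) : ContDiff ℝ (⊤ : ℕ∞) (leftTrans A a b s) := by
  unfold leftTrans
  fun_prop

lemma map_leftTrans (A : Fin n → Matrix (Fin m) (Fin m) ℝ) (a : Fin m → ℝ) (b : Fin n → ℝ)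
    (s : ℝ) : Measure.map (leftTrans A a b s) volume = (volume : Measure (Pt m n)) := by
  have h := MeasurePreserving.skew_product (μa := (volume : Measure (Fin m → ℝ)))
    (μb := volume) (μc := (volume : Measure (Fin n → ℝ))) (μd := volume)
    (f := fun x => x + s • a) (measurePreserving_add_right _ _)
    (g := fun x t => t + s • (b + shearL A a x))
    (Continuous.measurable (by unfold Function.uncurry; fun_prop))
    (Eventually.of_forall fun x => (measurePreserving_add_right volume _).map_eq)
  exact h.map_eq

/-- The horizontal fields `X_j` are left-invariant. -/
lemma Xvf_leftTrans (A : Fin n → Matrix (Fin m) (Fin m) ℝ) (a : Fin m → ℝ) (b : Fin n → ℝ)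
    (s : ℝ) (u : Pt m n → ℝ) (hu : ContDiff ℝ (⊤ : ℕ∞) u) (j : Fin m) (q : Pt m n) :
    Xvf m n A j (fun y => u (leftTrans A a b s y)) q = Xvf m n A j u (leftTrans A a b s q) := by
  have hu' : DifferentiableAt ℝ u (leftTrans A a b s q) := hu.differentiable (by simp) _
  have ht : HasFDerivAt (leftTrans A a b s)
      ((ContinuousLinearMap.fst ℝ (Fin m → ℝ) (Fin n → ℝ)).prod
        (ContinuousLinearMap.snd ℝ (Fin m → ℝ) (Fin n → ℝ) +
          s • (shearL A a).comp (ContinuousLinearMap.fst ℝ (Fin m → ℝ) (Fin n → ℝ)))) q := by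
    refine HasFDerivAt.prodMk (hasFDerivAt_fst.add_const _) (hasFDerivAt_snd.add ?_)
    exact (((shearL A a).hasFDerivAt.comp q hasFDerivAt_fst).const_add b).const_smul s
  have hc : fderiv ℝ (fun y => u (leftTrans A a b s y)) q = _ := (hu'.hasFDerivAt.comp q ht).fderiv
  set T := fderiv ℝ u (leftTrans A a b s q) with hT
  have hsplit : T (Pi.single j 1, s • shearL A a (Pi.single j 1)) =
      T (Pi.single j 1, 0) + ∑ k, (s * ((1 / 2) * ∑ i, a i * A k i j)) * T (0, Pi.single k 1) := by
    have : ((Pi.single j 1, s • shearL A a (Pi.single j 1)) : Pt m n) =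
        (Pi.single j 1, 0) +
          ∑ k, (s * ((1 / 2) * ∑ i, a i * A k i j)) • ((0, Pi.single k 1) : Pt m n) := by
      refine Prod.ext ?_ ?_
      · simp [Prod.fst_sum]
      · funext r
        simp [Prod.snd_sum, shearL_apply, shear_single, Pi.single_apply, Finset.sum_apply]
    rw [this, map_add, map_sum]
    simp only [map_smul, smul_eq_mul]
  simp only [Xvf, hc, ← hT]
  simp only [ContinuousLinearMap.comp_apply, ContinuousLinearMap.prod_apply,
    _root_.add_apply, _root_.smul_apply, ContinuousLinearMap.coe_fst',
    ContinuousLinearMap.coe_snd', map_zero, smul_zero, add_zero, zero_add, hsplit]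
  have key : ∀ k, s * ((1 / 2) * ∑ i, a i * A k i j) + 1 / 2 * ∑ i, A k i j * q.1 i =
      1 / 2 * ∑ i, A k i j * (leftTrans A a b s q).1 i := fun k => by
    simp only [leftTrans, Pi.add_apply, Pi.smul_apply, smul_eq_mul, Finset.mul_sum,
      ← Finset.sum_add_distrib]
    exact Finset.sum_congr rfl fun i _ => by ring
  rw [add_assoc, Finset.mul_sum, Finset.mul_sum, ← Finset.sum_add_distrib]
  congr 1
  refine Finset.sum_congr rfl fun k _ => ?_
  rw [← mul_assoc (1 / 2 : ℝ) _ (T _), ← mul_assoc (1 / 2 : ℝ) _ (T _), ← add_mul, key]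

/-- Left translations of the group, generated by `(a, b)`. -/
def transFlow (A : Fin n → Matrix (Fin m) (Fin m) ℝ) (hA : ∀ k, (A k)ᵀ = -(A k))
    (a : Fin m → ℝ) (b : Fin n → ℝ) : ConformalFlow m n A where
  κ := 0
  Φ := leftTrans A a b
  W q := (1 + (∑ i, q.1 i ^ 2) / 4) * (∑ i, q.1 i * a i)
    + ∑ k, 2 * q.2 k * (b k + shearL A a q.1 k)
  C := ∑ i, |a i| + ∑ k, (|b k| + ∑ j, ∑ i, 2 * |a j * A k j i|)
  smooth := contDiff_leftTrans A a b
  zero q := by simp [leftTrans]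
  inv s q := by
    have h : shearL A a a = 0 := shear_self hA a
    refine Prod.ext ?_ ?_
    · simp [leftTrans]
    · simp [leftTrans, h]
      abel
  map s := by simp [map_leftTrans]
  grad u hu s q := by
    simp [gradSq, Xvf_leftTrans A a b s u hu]
  deriv s q := by
    have hs : shearL A a (q.1 + s • a) = shearL A a q.1 := by
      simp [shearL_apply, shear_add, shear_smul, shear_self hA]
    have h := hasDerivAt_Dn (x := fun s => (leftTrans A a b s q).1)
      (t := fun s => (leftTrans A a b s q).2) (x' := a) (t' := b + shearL A a q.1) (s := s)
      (fun i => by simpa [leftTrans] using ((hasDerivAt_id s).mul_const (a i)).const_add (q.1 i))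
      (fun k => by
        exact (((hasDerivAt_id s).mul_const (b k + shearL A a q.1 k)).const_add
          (q.2 k)).congr_deriv (by simp))
    refine HasDerivAt.congr_deriv h ?_
    simp [leftTrans, hs]
  cont := by fun_prop
  bound q := by
    set X := ∑ i, q.1 i ^ 2 with hX
    set T := ∑ k, q.2 k ^ 2 with hT
    have hX0 : 0 ≤ X := Finset.sum_nonneg fun _ _ => sq_nonneg _
    have hT0 : 0 ≤ T := Finset.sum_nonneg fun _ _ => sq_nonneg _
    have hx : ∀ i, q.1 i ^ 2 ≤ X := fun i =>
      Finset.single_le_sum (f := fun i => q.1 i ^ 2) (fun _ _ => sq_nonneg _) (Finset.mem_univ i)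
    have ht : ∀ k, q.2 k ^ 2 ≤ T := fun k =>
      Finset.single_le_sum (f := fun k => q.2 k ^ 2) (fun _ _ => sq_nonneg _) (Finset.mem_univ k)
    have hD : Dn m n q = (1 + X / 4) ^ 2 + T := rfl
    have b1 : ∀ i, (1 + X / 4) * |q.1 i| ≤ Dn m n q := fun i => by
      have h1 : |q.1 i| ≤ 1 + X / 4 := by
        have := hx i
        rw [← sq_abs] at this
        nlinarith [sq_nonneg (|q.1 i| / 2 - 1)]
      rw [hD]
      nlinarith [abs_nonneg (q.1 i)]
    have b2 : ∀ k, 2 * |q.2 k| ≤ Dn m n q := fun k => by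
      have := ht k
      rw [← sq_abs] at this
      rw [hD]
      nlinarith [sq_nonneg (|q.2 k| - 1)]
    have b3 : ∀ k i, |q.2 k| * |q.1 i| ≤ 2 * Dn m n q := fun k i => by
      have h1 := ht k
      have h2 := hx i
      rw [← sq_abs] at h1 h2
      rw [hD]
      nlinarith [sq_nonneg (|q.2 k| - |q.1 i|)]
    have hD0 : 0 ≤ Dn m n q := zero_le_one.trans (one_le_Dn m n q)
    rw [add_mul _ _ (Dn m n q), Finset.mul_sum]
    refine (abs_add_le _ _).trans (add_le_add ?_ ?_)
    · rw [Finset.sum_mul]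
      refine (Finset.abs_sum_le_sum_abs _ _).trans (Finset.sum_le_sum fun i _ => ?_)
      rw [abs_mul, abs_mul, abs_of_nonneg (by positivity : 0 ≤ 1 + X / 4), ← mul_assoc,
        mul_comm (|a i|)]
      exact mul_le_mul_of_nonneg_right (b1 i) (abs_nonneg _)
    · rw [Finset.sum_mul]
      refine (Finset.abs_sum_le_sum_abs _ _).trans (Finset.sum_le_sum fun k _ => ?_)
      rw [mul_add, add_mul]
      refine (abs_add_le _ _).trans (add_le_add ?_ ?_)
      · rw [abs_mul, abs_mul, abs_two, mul_comm (|b k|)]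
        exact mul_le_mul_of_nonneg_right (b2 k) (abs_nonneg _)
      · rw [shearL_apply, shear, show ∀ z : ℝ, 2 * q.2 k * (1 / 2 * z) = q.2 k * z from
          fun z => by ring, Finset.mul_sum, Finset.sum_mul]
        refine (Finset.abs_sum_le_sum_abs _ _).trans (Finset.sum_le_sum fun j _ => ?_)
        rw [Finset.mul_sum, Finset.sum_mul]
        refine (Finset.abs_sum_le_sum_abs _ _).trans (Finset.sum_le_sum fun i _ => ?_)
        calc |q.2 k * (a j * A k j i * q.1 i)| = |a j * A k j i| * (|q.2 k| * |q.1 i|) := by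
              simp only [abs_mul]; ring
          _ ≤ |a j * A k j i| * (2 * Dn m n q) :=
              mul_le_mul_of_nonneg_left (b3 k i) (abs_nonneg _)
          _ = _ := by ring

/-- The anisotropic dilation `(x, t) ↦ (e^s x, e^{2s} t)`. -/
def dil (m n : ℕ) (s : ℝ) (q : Pt m n) : Pt m n :=
  (Real.exp s • q.1, Real.exp (2 * s) • q.2)

lemma map_dil (s : ℝ) : Measure.map (dil m n s) volume =
    ENNReal.ofReal (Real.exp (-(Qh m n * s))) • (volume : Measure (Pt m n)) := by
  have h1 := Measure.map_addHaar_smul (volume : Measure (Fin m → ℝ)) (Real.exp_ne_zero s)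
  have h2 := Measure.map_addHaar_smul (volume : Measure (Fin n → ℝ)) (Real.exp_ne_zero (2 * s))
  have h := Measure.map_prod_map (volume : Measure (Fin m → ℝ)) (volume : Measure (Fin n → ℝ))
    (f := (Real.exp s • ·)) (g := (Real.exp (2 * s) • ·))
    (continuous_const_smul _).measurable (continuous_const_smul _).measurable
  rw [h1, h2, Measure.prod_smul_left, Measure.prod_smul_right, smul_smul,
    ← ENNReal.ofReal_mul (abs_nonneg _)] at h
  have e : |(Real.exp s ^ Module.finrank ℝ (Fin m → ℝ))⁻¹| *
      |(Real.exp (2 * s) ^ Module.finrank ℝ (Fin n → ℝ))⁻¹| = Real.exp (-(Qh m n * s)) := by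
    rw [abs_of_pos (by positivity), abs_of_pos (by positivity), Module.finrank_fin_fun,
      Module.finrank_fin_fun, ← Real.exp_nat_mul, ← Real.exp_nat_mul, ← Real.exp_neg,
      ← Real.exp_neg, ← Real.exp_add]
    congr 1
    unfold Qh
    ring
  rw [e] at h
  exact h.symm

lemma Xvf_dil (A : Fin n → Matrix (Fin m) (Fin m) ℝ) (s : ℝ) (u : Pt m n → ℝ)
    (hu : ContDiff ℝ (⊤ : ℕ∞) u) (j : Fin m) (q : Pt m n) :
    Xvf m n A j (fun y => u (dil m n s y)) q = Real.exp s * Xvf m n A j u (dil m n s q) := by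
  have hu' : DifferentiableAt ℝ u (dil m n s q) := hu.differentiable (by simp) _
  have ht : HasFDerivAt (dil m n s)
      ((Real.exp s • ContinuousLinearMap.fst ℝ (Fin m → ℝ) (Fin n → ℝ)).prod
        (Real.exp (2 * s) • ContinuousLinearMap.snd ℝ (Fin m → ℝ) (Fin n → ℝ))) q :=
    HasFDerivAt.prodMk (hasFDerivAt_fst.const_smul (Real.exp s))
      (hasFDerivAt_snd.const_smul (Real.exp (2 * s)))
  have hc : fderiv ℝ (fun y => u (dil m n s y)) q = _ := (hu'.hasFDerivAt.comp q ht).fderiv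
  set T := fderiv ℝ u (dil m n s q) with hT
  have e1 : T (Real.exp s • Pi.single j 1, 0) = Real.exp s * T (Pi.single j 1, 0) := by
    rw [← smul_eq_mul, ← map_smul, Prod.smul_mk, smul_zero]
  have e2 : ∀ k, T (0, Real.exp (2 * s) • Pi.single k 1) =
      Real.exp (2 * s) * T (0, Pi.single k 1) := fun k => by
    rw [← smul_eq_mul (Real.exp (2 * s)), ← map_smul, Prod.smul_mk, smul_zero]
  simp only [Xvf, hc, ← hT]
  simp only [ContinuousLinearMap.comp_apply, ContinuousLinearMap.prod_apply,
    _root_.smul_apply, ContinuousLinearMap.coe_fst',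
    ContinuousLinearMap.coe_snd', smul_zero, e1, e2]
  rw [mul_add, ← mul_assoc, mul_comm (Real.exp s) (1 / 2), mul_assoc (1 / 2), Finset.mul_sum _ _
    (Real.exp s)]
  congr 2
  refine Finset.sum_congr rfl fun k _ => ?_
  simp only [dil, Pi.smul_apply, smul_eq_mul, two_mul s, Real.exp_add, Finset.sum_mul,
    Finset.mul_sum]
  exact Finset.sum_congr rfl fun i _ => by ring

/-- The dilations of the group. -/
def dilFlow (A : Fin n → Matrix (Fin m) (Fin m) ℝ) : ConformalFlow m n A where
  κ := 1
  Φ := dil m n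
  W q := (1 + (∑ i, q.1 i ^ 2) / 4) * (∑ i, q.1 i ^ 2) + 4 * ∑ k, q.2 k ^ 2
  C := 4
  smooth s := by unfold dil; fun_prop
  zero q := by simp [dil]
  inv s q := by simp [dil, smul_smul, ← Real.exp_add]
  map s := by simpa using map_dil s
  grad u hu s q := by
    simp only [gradSq, Xvf_dil A s u hu, mul_pow, ← Finset.mul_sum]
    rw [← Real.exp_nat_mul]
    simp
  deriv s q := by
    have h := hasDerivAt_Dn (x := fun s => (dil m n s q).1)
      (t := fun s => (dil m n s q).2) (x' := (dil m n s q).1)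
      (t' := (2 : ℝ) • (dil m n s q).2) (s := s)
      (fun i => (Real.hasDerivAt_exp s).mul_const (q.1 i))
      (fun k => by
        have h := (((hasDerivAt_id s).const_mul 2).exp).mul_const (q.2 k)
        exact h.congr_deriv (by simp [dil]; ring))
    refine HasDerivAt.congr_deriv h ?_
    simp only [Pi.smul_apply, smul_eq_mul, ← sq, Finset.mul_sum]
    congr 1
    exact Finset.sum_congr rfl fun i _ => by ring
  cont := by fun_prop
  bound q := by
    have hX0 : 0 ≤ ∑ i, q.1 i ^ 2 := Finset.sum_nonneg fun _ _ => sq_nonneg _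
    have hT0 : 0 ≤ ∑ k, q.2 k ^ 2 := Finset.sum_nonneg fun _ _ => sq_nonneg _
    rw [abs_of_nonneg (by positivity), Dn]
    nlinarith

end Flows

/-! ### The moments -/

/-- **Moment-zero condition for subcritical minimizers (Lemma 3.3)**. -/
theorem minimizer_moment_zero (m n : ℕ) (hm : 1 ≤ m) (hn : 1 ≤ n)
    (A : Fin n → Matrix (Fin m) (Fin m) ℝ) (hA : IsHType m n A)
    (p : ℝ) (hp1 : 2 ≤ p) (hp2 : p < 2 * Qh m n / (Qh m n - 2))
    (u : Pt m n → ℝ) (hu : ContDiff ℝ (⊤ : ℕ∞) u) (hpos : ∀ q : Pt m n, 0 < u q)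
    (hint : Integrable (fun q : Pt m n => gradSq m n A u q))
    (hgrad : 0 < ∫ q : Pt m n, gradSq m n A u q)
    (hconstr : ∫ q : Pt m n,
        u q ^ p * Uf m n q ^ (2 * Qh m n / (Qh m n - 2) - p) = 1)
    (hmin : ∀ v : Pt m n → ℝ, ContDiff ℝ (⊤ : ℕ∞) v →
      Integrable (fun q : Pt m n => gradSq m n A v q) →
      (∫ q : Pt m n, gradSq m n A v q) ≠ 0 →
      Integrable (fun q : Pt m n =>
        |v q| ^ p * Uf m n q ^ (2 * Qh m n / (Qh m n - 2) - p)) →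
      (∫ q : Pt m n, |v q| ^ p * Uf m n q ^ (2 * Qh m n / (Qh m n - 2) - p)) ≠ 0 →
      (∫ q : Pt m n, gradSq m n A u q) /
          (∫ q : Pt m n, u q ^ p * Uf m n q ^ (2 * Qh m n / (Qh m n - 2) - p)) ^ (2 / p)
        ≤ (∫ q : Pt m n, gradSq m n A v q) /
            (∫ q : Pt m n,
              |v q| ^ p * Uf m n q ^ (2 * Qh m n / (Qh m n - 2) - p)) ^ (2 / p)) :
    (∀ j : Fin m, ∫ q : Pt m n,
        u q ^ p * Uf m n q ^ (2 * Qh m n / (Qh m n - 2) - p) * om1 m n A j q = 0) ∧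
    (∀ r : Fin n, ∫ q : Pt m n,
        u q ^ p * Uf m n q ^ (2 * Qh m n / (Qh m n - 2) - p) * om2 m n r q = 0) ∧
    (∫ q : Pt m n,
        u q ^ p * Uf m n q ^ (2 * Qh m n / (Qh m n - 2) - p) * om3 m n q = 0) := by
  have hQ : 2 < Qh m n := by
    have h1 : (1 : ℝ) ≤ m := by exact_mod_cast hm
    have h2 : (1 : ℝ) ≤ n := by exact_mod_cast hn
    unfold Qh
    linarith
  refine ⟨fun j => ?_, fun r => ?_, ?_⟩
  · rw [← (transFlow A hA.1 (Pi.single j 1) 0).moment hQ p hp1 hp2 u hu hpos hint hgrad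
      hconstr hmin]
    refine integral_congr_ae (Eventually.of_forall fun q => ?_)
    have h : ∀ k, 2 * q.2 k * shear A (Pi.single j 1) q.1 k =
        ∑ i, q.2 k * q.1 i * A k j i := fun k => by
      simp only [shear, Pi.single_apply, ite_mul, one_mul, zero_mul, Finset.sum_ite_irrel,
        Finset.sum_const_zero, Finset.sum_ite_eq', Finset.mem_univ, if_true, Finset.mul_sum]
      exact Finset.sum_congr rfl fun i _ => by ring
    simp [om1, transFlow, Uf_rpow_four m n hQ, shearL_apply, h, Pi.single_apply]
    left
    ring
  · rw [← (transFlow A hA.1 0 (Pi.single r 1)).moment hQ p hp1 hp2 u hu hpos hint hgrad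
      hconstr hmin]
    refine integral_congr_ae (Eventually.of_forall fun q => ?_)
    have h : shear A 0 q.1 = 0 := by
      funext k
      simp [shear]
    simp [om2, transFlow, Uf_rpow_four m n hQ, shearL_apply, h, Pi.single_apply]
    left
    ring
  · have h0 := (dilFlow A).moment hQ p hp1 hp2 u hu hpos hint hgrad hconstr hmin
    -- for the dilations the logarithmic derivative is `-2 ω_{m+n+1}`
    have h : ∀ q, (dilFlow A).W q / Dn m n q - 2 * (dilFlow A).κ = -2 * om3 m n q := fun q => by
      have hD : Dn m n q ≠ 0 := by linarith [one_le_Dn m n q]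
      rw [om3, Uf_rpow_four m n hQ]
      simp only [dilFlow]
      field_simp
      unfold Dn
      ring
    simp only [h, mul_left_comm _ (-2 : ℝ), integral_const_mul] at h0
    linarith
end
end

section
/- (Lemma 3.4.) For every smooth compactly supported function u : ℝ^m × ℝ^n → ℝ, ∑_{i=1}^{m+n+1} ∫ |∇_G(u·ω_i)|² dx dt = ∫ |∇_G u|² dx dt + m ∫ u(x,t)² / ((1 + |x|²/4)² + |t|²) dx dt. -/
/-!
Write `D = (1 + |x|²/4)² + |t|²`. Since `U ^ (4/(Q-2)) = D⁻¹` (`Uf_rpow`), each `ω_i` is `f_i / D`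
with `f_i` a polynomial. The identity holds pointwise, before integration (`pointwise`): expanding
`X_k (u ω_i) = ω_i X_k u + u X_k ω_i` and summing over `i`,
`∑ |∇(u ω_i)|² = |∇u|² ∑ ω_i² + u ∇u · ∇(∑ ω_i²) + u² ∑ |∇ω_i|²`,
and the two facts needed are `∑ ω_i² = 1` (the `ω_i` are the coordinates of a Cayley transform
onto a sphere) and `∑ |∇ω_i|² = m / D`.

In terms of the `f_i` the first fact is `∑ f_i² = D²` (`sum_Ff_sq`). Differentiating it gives
`∑ f_i X_k f_i = D X_k D` (`sum_Ff_Fd`), so that the second fact becomes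
`∑ |∇f_i|² = |∇D|² + m D` (`sum_Fd_sq`). With `J_t = ∑ t_r A_r`, the Jacobian of `(f_1, …, f_m)` is
`½ x xᵀ + (1 + |x|²/4) I + J_t - ½ ∑ (A_r x)(A_r x)ᵀ`, whose Frobenius norm is computed in
`frobenius_first`. The H-type condition enters through the orthogonality relations
`⟨A_r x, A_s x⟩ = δ_rs |x|²`, `⟨x, J_t x⟩ = 0` and `|J_t x|² = |t|² |x|²`.
-/


open MeasureTheory Real Filter Matrix

noncomputable section

/-! ### Calculus of the horizontal fields -/

/-- `f` is differentiable at `p` and its derivative along the horizontal field `X_k` is `d`. -/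
def HasX (m n : ℕ) (A : Fin n → Matrix (Fin m) (Fin m) ℝ) (k : Fin m) (p : Pt m n)
    (f : Pt m n → ℝ) (d : ℝ) : Prop :=
  DifferentiableAt ℝ f p ∧ Xvf m n A k f p = d

section calculus

variable {m n : ℕ} {A : Fin n → Matrix (Fin m) (Fin m) ℝ} {k : Fin m} {p : Pt m n}
  {f g : Pt m n → ℝ} {d e : ℝ}

/-- `X_k` at `p` is the directional derivative along one fixed vector. -/
lemma Xvf_eq (m n : ℕ) (A : Fin n → Matrix (Fin m) (Fin m) ℝ) (k : Fin m) (p : Pt m n)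
    (f : Pt m n → ℝ) :
    Xvf m n A k f p
      = fderiv ℝ f p (Pi.single k 1, fun r => (1/2) * ∑ i, A r i k * p.1 i) := by
  have h : ((Pi.single k 1, fun r => (1/2) * ∑ i, A r i k * p.1 i) : Pt m n)
      = (Pi.single k 1, 0)
        + ∑ r : Fin n, ((1/2) * ∑ i, A r i k * p.1 i) • ((0, Pi.single r 1) : Pt m n) := by
    refine Prod.ext ?_ ?_
    · simp [Prod.fst_sum]
    · ext r
      simp [Prod.snd_sum, Finset.sum_apply, Pi.single_apply]
  rw [h, map_add, map_sum]
  simp only [Xvf, map_smul, smul_eq_mul]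
  rw [Finset.mul_sum]
  simp only [mul_assoc]

lemma HasX.congr_val (hf : HasX m n A k p f d) (h : d = e) : HasX m n A k p f e := h ▸ hf

lemma HasX.unique (hf : HasX m n A k p f d) (hf' : HasX m n A k p f e) : d = e :=
  hf.2.symm.trans hf'.2

lemma hasX_of_differentiableAt (hf : DifferentiableAt ℝ f p) :
    HasX m n A k p f (Xvf m n A k f p) := ⟨hf, rfl⟩

lemma HasX.add (hf : HasX m n A k p f d) (hg : HasX m n A k p g e) :
    HasX m n A k p (fun q => f q + g q) (d + e) := by
  refine ⟨hf.1.add hg.1, ?_⟩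
  rw [← hf.2, ← hg.2, Xvf_eq, Xvf_eq, Xvf_eq, fderiv_fun_add hf.1 hg.1]; rfl

lemma HasX.sub (hf : HasX m n A k p f d) (hg : HasX m n A k p g e) :
    HasX m n A k p (fun q => f q - g q) (d - e) := by
  refine ⟨hf.1.sub hg.1, ?_⟩
  rw [← hf.2, ← hg.2, Xvf_eq, Xvf_eq, Xvf_eq, fderiv_fun_sub hf.1 hg.1]; rfl

lemma HasX.mul (hf : HasX m n A k p f d) (hg : HasX m n A k p g e) :
    HasX m n A k p (fun q => f q * g q) (d * g p + f p * e) := by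
  refine ⟨hf.1.mul hg.1, ?_⟩
  rw [← hf.2, ← hg.2, Xvf_eq, Xvf_eq, Xvf_eq, fderiv_fun_mul hf.1 hg.1]
  simp only [_root_.add_apply, _root_.smul_apply, smul_eq_mul]
  ring

lemma hasX_const (c : ℝ) : HasX m n A k p (fun _ => c) 0 := by
  refine ⟨differentiableAt_const c, ?_⟩
  rw [Xvf_eq]; simp

lemma HasX.sum {ι : Type*} (s : Finset ι) {F : ι → Pt m n → ℝ} {F' : ι → ℝ}
    (h : ∀ i, HasX m n A k p (F i) (F' i)) :
    HasX m n A k p (fun q => ∑ i ∈ s, F i q) (∑ i ∈ s, F' i) := by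
  classical
  induction s using Finset.induction_on with
  | empty => simpa using hasX_const (A := A) (k := k) (p := p) 0
  | insert a s ha ih => simpa only [Finset.sum_insert ha] using (h a).add ih

/-- Quotients `f / g`, in a form suited to the algebra of the main identity. -/
lemma HasX.div (hf : HasX m n A k p f d) (hg : HasX m n A k p g e) (h0 : g p ≠ 0) :
    HasX m n A k p (fun q => f q / g q) (d / g p - f p * e / g p ^ 2) := by
  have hd : DifferentiableAt ℝ (fun q => f q / g q) p := by
    simpa only [div_eq_mul_inv] using hf.1.fun_mul (hg.1.fun_inv h0)
  have h1 := hasX_of_differentiableAt (A := A) (k := k) hd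
  refine h1.congr_val ?_
  have h2 := h1.mul hg
  have h3 : (fun q => f q / g q * g q) =ᶠ[nhds p] f := by
    filter_upwards [hg.1.continuousAt.eventually_ne h0] with q hq
    field_simp
  have h4 : Xvf m n A k (fun q => f q / g q * g q) p = d := by
    rw [Xvf_eq, h3.fderiv_eq, ← Xvf_eq, hf.2]
  rw [h2.2] at h4
  rw [← h4]
  field_simp
  ring

lemma hasX_fst (j : Fin m) :
    HasX m n A k p (fun q => q.1 j) (if j = k then 1 else 0) := by
  refine ⟨by fun_prop, ?_⟩
  rw [Xvf_eq]
  have : HasFDerivAt (fun q : Pt m n => q.1 j)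
      ((ContinuousLinearMap.proj (R := ℝ) (φ := fun _ : Fin m => ℝ) j).comp
        (ContinuousLinearMap.fst ℝ (Fin m → ℝ) (Fin n → ℝ))) p :=
    ContinuousLinearMap.hasFDerivAt
      ((ContinuousLinearMap.proj (R := ℝ) (φ := fun _ : Fin m => ℝ) j).comp
        (ContinuousLinearMap.fst ℝ (Fin m → ℝ) (Fin n → ℝ)))
  rw [this.fderiv]
  simp [Pi.single_apply]

lemma hasX_snd (r : Fin n) :
    HasX m n A k p (fun q => q.2 r) ((1/2) * ∑ i, A r i k * p.1 i) := by
  refine ⟨by fun_prop, ?_⟩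
  rw [Xvf_eq]
  have : HasFDerivAt (fun q : Pt m n => q.2 r)
      ((ContinuousLinearMap.proj (R := ℝ) (φ := fun _ : Fin n => ℝ) r).comp
        (ContinuousLinearMap.snd ℝ (Fin m → ℝ) (Fin n → ℝ))) p :=
    ContinuousLinearMap.hasFDerivAt
      ((ContinuousLinearMap.proj (R := ℝ) (φ := fun _ : Fin n => ℝ) r).comp
        (ContinuousLinearMap.snd ℝ (Fin m → ℝ) (Fin n → ℝ)))
  rw [this.fderiv]
  simp

end calculus

/-! ### Algebra of H-type matrices -/

section algebra

variable {m n : ℕ} {A : Fin n → Matrix (Fin m) (Fin m) ℝ}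

lemma IsHType.anticomm (hA : IsHType m n A) (r s : Fin n) :
    A r * A s + A s * A r = if r = s then (-2 : ℝ) • (1 : Matrix (Fin m) (Fin m) ℝ) else 0 := by
  split_ifs with h
  · subst h
    have h1 := hA.2.1 r
    rw [hA.1 r, mul_neg] at h1
    rw [← h1]
    module
  · exact hA.2.2 r s h

/-- The vectors `A_r x` are orthogonal, each of length `|x|`. -/
lemma IsHType.dot_mulVec (hA : IsHType m n A) (x : Fin m → ℝ) (r s : Fin n) :
    (A r *ᵥ x) ⬝ᵥ (A s *ᵥ x) = if r = s then x ⬝ᵥ x else 0 := by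
  have key : ∀ r s, (A r *ᵥ x) ⬝ᵥ (A s *ᵥ x) = - (x ⬝ᵥ ((A r * A s) *ᵥ x)) := by
    intro r s
    rw [← mulVec_mulVec, dotProduct_mulVec x, ← mulVec_transpose, hA.1 r, neg_mulVec,
      neg_dotProduct, neg_neg]
  have h := congrArg (fun M => x ⬝ᵥ (M *ᵥ x)) (hA.anticomm r s)
  have h1 := key r s
  have h2 := key s r
  rw [dotProduct_comm] at h2
  simp only [add_mulVec, dotProduct_add] at h
  split_ifs with hrs
  · rw [if_pos hrs] at h
    simp only [smul_mulVec, one_mulVec, dotProduct_smul, smul_eq_mul] at h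
    linarith
  · rw [if_neg hrs] at h
    simp only [zero_mulVec, dotProduct_zero] at h
    linarith

lemma dot_mulVec_self {M : Matrix (Fin m) (Fin m) ℝ} (hM : Mᵀ = -M) (x : Fin m → ℝ) :
    x ⬝ᵥ (M *ᵥ x) = 0 := by
  have h : x ⬝ᵥ (M *ᵥ x) = -(x ⬝ᵥ (M *ᵥ x)) := by
    conv_lhs => rw [dotProduct_mulVec, ← mulVec_transpose, hM, neg_mulVec, neg_dotProduct,
      dotProduct_comm]
  linarith

/-- The matrix `J_t = ∑ t_r A_r`. -/
def Jm (A : Fin n → Matrix (Fin m) (Fin m) ℝ) (t : Fin n → ℝ) : Matrix (Fin m) (Fin m) ℝ :=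
  ∑ r, t r • A r

lemma Jm_transpose (hA : IsHType m n A) (t : Fin n → ℝ) : (Jm A t)ᵀ = -Jm A t := by
  simp [Jm, transpose_sum, hA.1]

lemma Jm_mulVec (t : Fin n → ℝ) (x : Fin m → ℝ) :
    Jm A t *ᵥ x = ∑ r, t r • (A r *ᵥ x) := by
  simp [Jm, sum_mulVec, smul_mulVec]

/-- `|J_t x|² = |t|² |x|²`. -/
lemma Jm_dot (hA : IsHType m n A) (t : Fin n → ℝ) (x : Fin m → ℝ) :
    (Jm A t *ᵥ x) ⬝ᵥ (Jm A t *ᵥ x) = (∑ r, t r ^ 2) * (x ⬝ᵥ x) := by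
  simp only [Jm_mulVec, sum_dotProduct, dotProduct_sum, smul_dotProduct, dotProduct_smul,
    hA.dot_mulVec, smul_eq_mul, mul_ite, mul_zero, Finset.sum_mul]
  exact Finset.sum_congr rfl fun r _ => by
    rw [Finset.sum_ite_eq' Finset.univ r, if_pos (Finset.mem_univ r)]
    ring

/-- The Frobenius norm of `J_t` is `m |t|²`. -/
lemma Jm_frobenius (hA : IsHType m n A) (t : Fin n → ℝ) :
    ∑ k, ∑ j, Jm A t j k ^ 2 = m * ∑ r, t r ^ 2 := by
  have h : ∀ k, ∑ j, Jm A t j k ^ 2 = ∑ r, t r ^ 2 := by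
    intro k
    have := Jm_dot hA t (Pi.single k 1)
    simpa [dotProduct, sq, Pi.single_apply] using this
  simp [h]

end algebra

/-! ### The conformal factors and their horizontal derivatives -/

section conformal

variable {m n : ℕ} {A : Fin n → Matrix (Fin m) (Fin m) ℝ}

/-- The denominator `D = (1 + |x|²/4)² + |t|²`. -/
def Df (m n : ℕ) (p : Pt m n) : ℝ := (1 + (∑ i, p.1 i ^ 2) / 4) ^ 2 + ∑ r, p.2 r ^ 2

lemma Df_pos (p : Pt m n) : 0 < Df m n p := by
  unfold Df
  have h1 : 0 ≤ ∑ i, p.1 i ^ 2 := Finset.sum_nonneg fun i _ => sq_nonneg _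
  have h2 : 0 ≤ ∑ r, p.2 r ^ 2 := Finset.sum_nonneg fun i _ => sq_nonneg _
  positivity

/-- The numerators `f_i = D ω_i` of all `m + n + 1` functions `ω_i`. -/
def Ff (m n : ℕ) (A : Fin n → Matrix (Fin m) (Fin m) ℝ) :
    Fin m ⊕ Fin n ⊕ Unit → Pt m n → ℝ
  | .inl j => fun p => (1 + (∑ i, p.1 i ^ 2) / 4) * p.1 j
      + ∑ r : Fin n, ∑ i : Fin m, p.2 r * p.1 i * A r j i
  | .inr (.inl r) => fun p => 2 * p.2 r
  | .inr (.inr _) => fun p => 1 - (∑ i, p.1 i ^ 2) ^ 2 / 16 - ∑ r, p.2 r ^ 2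

/-- The values of `X_k f_i` at `p`. -/
def Fd (m n : ℕ) (A : Fin n → Matrix (Fin m) (Fin m) ℝ) (k : Fin m) (p : Pt m n) :
    Fin m ⊕ Fin n ⊕ Unit → ℝ
  | .inl j => (1/2) * (p.1 k * p.1 j) + (1 + (∑ i, p.1 i ^ 2) / 4) * (if j = k then 1 else 0)
      + Jm A p.2 j k - (1/2) * ∑ r, (A r *ᵥ p.1) k * (A r *ᵥ p.1) j
  | .inr (.inl r) => - (A r *ᵥ p.1) k
  | .inr (.inr _) => (Jm A p.2 *ᵥ p.1) k - (∑ i, p.1 i ^ 2) / 4 * p.1 k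

/-- The value of `X_k D` at `p`. -/
def Dd (m n : ℕ) (A : Fin n → Matrix (Fin m) (Fin m) ℝ) (k : Fin m) (p : Pt m n) : ℝ :=
  (1 + (∑ i, p.1 i ^ 2) / 4) * p.1 k - (Jm A p.2 *ᵥ p.1) k

lemma hasX_t (hA : IsHType m n A) (k : Fin m) (p : Pt m n) (r : Fin n) :
    HasX m n A k p (fun q => q.2 r) (-(1/2) * (A r *ᵥ p.1) k) := by
  refine (hasX_snd r).congr_val ?_
  have h : ∀ i, A r i k = - A r k i := fun i => by
    simpa using congrFun (congrFun (hA.1 r) k) i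
  simp [h, mulVec, dotProduct]

lemma hasX_normSq_x (k : Fin m) (p : Pt m n) :
    HasX m n A k p (fun q => ∑ i, q.1 i ^ 2) (2 * p.1 k) := by
  simp only [sq]
  refine (HasX.sum _ fun i => (hasX_fst i).mul (hasX_fst i)).congr_val ?_
  simp [Finset.sum_add_distrib]
  ring

lemma hasX_normSq_t (hA : IsHType m n A) (k : Fin m) (p : Pt m n) :
    HasX m n A k p (fun q => ∑ r, q.2 r ^ 2) (-(Jm A p.2 *ᵥ p.1) k) := by
  simp only [sq]
  refine (HasX.sum _ fun r => (hasX_t hA k p r).mul (hasX_t hA k p r)).congr_val ?_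
  rw [Jm_mulVec, Finset.sum_apply, ← Finset.sum_neg_distrib]
  refine Finset.sum_congr rfl fun r _ => ?_
  simp only [Pi.smul_apply, smul_eq_mul]
  ring

lemma hasX_s (k : Fin m) (p : Pt m n) :
    HasX m n A k p (fun q => 1 + (∑ i, q.1 i ^ 2) / 4) (p.1 k / 2) := by
  simp only [div_eq_mul_inv]
  refine ((hasX_const 1).add ((hasX_normSq_x k p).mul (hasX_const _))).congr_val ?_
  ring

lemma hasX_Df (hA : IsHType m n A) (k : Fin m) (p : Pt m n) :
    HasX m n A k p (Df m n) (Dd m n A k p) := by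
  have h := ((hasX_s k p).mul (hasX_s k p)).add (hasX_normSq_t hA k p)
  simp only [← sq] at h
  refine HasX.congr_val (f := Df m n) h ?_
  simp only [Dd]
  ring

lemma hasX_Ff (hA : IsHType m n A) (k : Fin m) (p : Pt m n) (i : Fin m ⊕ Fin n ⊕ Unit) :
    HasX m n A k p (Ff m n A i) (Fd m n A k p i) := by
  rcases i with j | r | _
  · have h := ((hasX_s k p).mul (hasX_fst j)).add
      (HasX.sum Finset.univ fun r => HasX.sum Finset.univ fun i =>
        ((hasX_t hA k p r).mul (hasX_fst i)).mul (hasX_const (A r j i)))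
    refine HasX.congr_val (f := Ff m n A (.inl j)) h ?_
    have h1 : ∑ r : Fin n, ∑ i : Fin m, ((-(1/2) * (A r *ᵥ p.1) k * p.1 i
          + p.2 r * (if i = k then 1 else 0)) * A r j i + p.2 r * p.1 i * 0)
        = Jm A p.2 j k - (1/2) * ∑ r, (A r *ᵥ p.1) k * (A r *ᵥ p.1) j := by
      rw [Jm, Matrix.sum_apply, Finset.mul_sum, ← Finset.sum_sub_distrib]
      refine Finset.sum_congr rfl fun r _ => ?_
      have h2 : (A r *ᵥ p.1) j = ∑ i, A r j i * p.1 i := rfl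
      rw [h2]
      simp only [add_mul, mul_zero, add_zero, Finset.sum_add_distrib, mul_ite, ite_mul, mul_one,
        zero_mul, Finset.sum_ite_eq', Finset.mem_univ, if_true, Finset.mul_sum, Matrix.smul_apply,
        smul_eq_mul]
      rw [sub_eq_add_neg, ← Finset.sum_neg_distrib, add_comm]
      congr 1
      exact Finset.sum_congr rfl fun i _ => by ring
    rw [h1]
    simp only [Fd]
    ring
  · refine HasX.congr_val (f := Ff m n A (.inr (.inl r))) ((hasX_const 2).mul (hasX_t hA k p r)) ?_
    simp only [Fd]
    ring
  · have h := ((hasX_const 1).sub (((hasX_normSq_x k p).mul (hasX_normSq_x k p)).mul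
      (hasX_const (16 : ℝ)⁻¹))).sub (hasX_normSq_t hA k p)
    simp only [← sq, ← div_eq_mul_inv] at h
    refine HasX.congr_val (f := Ff m n A (.inr (.inr _))) h ?_
    simp only [Fd]
    ring

lemma sum_sq_eq_dot (x : Fin m → ℝ) : ∑ i, x i ^ 2 = x ⬝ᵥ x := by
  simp [dotProduct, sq]

/-- `∑ f_i² = D²`, that is, `∑ ω_i² = 1`. -/
lemma sum_Ff_sq (hA : IsHType m n A) (p : Pt m n) :
    ∑ i, Ff m n A i p ^ 2 = Df m n p ^ 2 := by
  have h1 : ∀ j, ∑ r : Fin n, ∑ i : Fin m, p.2 r * p.1 i * A r j i = (Jm A p.2 *ᵥ p.1) j := by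
    intro j
    rw [Jm_mulVec, Finset.sum_apply]
    refine Finset.sum_congr rfl fun r _ => ?_
    simp only [Pi.smul_apply, smul_eq_mul, mulVec, dotProduct, Finset.mul_sum]
    exact Finset.sum_congr rfl fun i _ => by ring
  have h2 := dot_mulVec_self (Jm_transpose hA p.2) p.1
  have h3 := Jm_dot hA p.2 p.1
  have h4 : ∀ s : ℝ, ∑ j, (s * p.1 j + (Jm A p.2 *ᵥ p.1) j) ^ 2
      = s ^ 2 * (p.1 ⬝ᵥ p.1) + 2 * s * (p.1 ⬝ᵥ (Jm A p.2 *ᵥ p.1))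
        + (Jm A p.2 *ᵥ p.1) ⬝ᵥ (Jm A p.2 *ᵥ p.1) := by
    intro s
    simp only [dotProduct, Finset.mul_sum, ← Finset.sum_add_distrib]
    exact Finset.sum_congr rfl fun i _ => by ring
  simp only [Fintype.sum_sum_type, Ff, Df, h1, h4, h2, h3, sum_sq_eq_dot, mul_pow,
    ← Finset.mul_sum, Finset.univ_unique, Finset.sum_singleton]
  ring

/-- The tangential identity `∑ f_i X_k f_i = D X_k D`, from differentiating `∑ f_i² = D²`. -/
lemma sum_Ff_Fd (hA : IsHType m n A) (k : Fin m) (p : Pt m n) :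
    ∑ i, Ff m n A i p * Fd m n A k p i = Df m n p * Dd m n A k p := by
  have h1 := HasX.sum Finset.univ fun i => (hasX_Ff hA k p i).mul (hasX_Ff hA k p i)
  have h2 := (hasX_Df hA k p).mul (hasX_Df hA k p)
  simp only [← sq, sum_Ff_sq hA] at h1
  simp only [← sq] at h2
  have h3 := h1.unique h2
  have h4 : ∑ i, (Fd m n A k p i * Ff m n A i p + Ff m n A i p * Fd m n A k p i)
      = 2 * ∑ i, Ff m n A i p * Fd m n A k p i := by
    rw [Finset.mul_sum]
    exact Finset.sum_congr rfl fun i _ => by ring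
  rw [h4] at h3
  linarith

/-- The squared Frobenius norm of the horizontal Jacobian of `(f_1, …, f_m)`, with `s` in
place of `1 + |x|²/4` (the value of `s` plays no role here). -/
lemma frobenius_first (hA : IsHType m n A) (x : Fin m → ℝ) (t : Fin n → ℝ) (s : ℝ) :
    ∑ k, ∑ j, ((1/2) * (x k * x j) + s * (if j = k then 1 else 0)
      + Jm A t j k - (1/2) * ∑ r, (A r *ᵥ x) k * (A r *ᵥ x) j) ^ 2
      = m * (s ^ 2 + ∑ r, t r ^ 2) + (1/4) * (1 + n) * (x ⬝ᵥ x) ^ 2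
        + s * (x ⬝ᵥ x) * (1 - n) := by
  set W : Fin m → Fin m → ℝ := fun k j => ∑ r, (A r *ᵥ x) k * (A r *ᵥ x) j with hW
  set δ : Fin m → Fin m → ℝ := fun k j => if j = k then 1 else 0 with hδ
  have e : ∀ k j, ((1/2) * (x k * x j) + s * δ k j + Jm A t j k - (1/2) * W k j) ^ 2
      = (1/4) * ((x k * x k) * (x j * x j)) + s ^ 2 * δ k j + Jm A t j k ^ 2
        + (1/4) * (W k j * W k j)
        + s * (δ k j * (x k * x j)) + x j * (Jm A t j k * x k) - (1/2) * (x k * x j * W k j)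
        + 2 * s * (δ k j * Jm A t j k) - s * (δ k j * W k j) - Jm A t j k * W k j := by
    intro k j
    have hd : δ k j ^ 2 = δ k j := by simp only [hδ]; split_ifs <;> norm_num
    linear_combination s ^ 2 * hd
  have hWsum : ∀ B : Fin m → Fin m → ℝ, ∑ k, ∑ j, B k j * W k j
      = ∑ r, ∑ k, ∑ j, B k j * ((A r *ᵥ x) k * (A r *ᵥ x) j) := by
    intro B
    simp only [hW, Finset.mul_sum]
    exact (Finset.sum_congr rfl fun k _ => Finset.sum_comm).trans Finset.sum_comm
  have l1 : ∑ k, ∑ j, (x k * x k) * (x j * x j) = (x ⬝ᵥ x) ^ 2 := by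
    simp only [sq, dotProduct, Finset.sum_mul_sum]
  have l2 : ∑ k, ∑ j, δ k j = m := by simp [hδ]
  have l3 := Jm_frobenius hA t
  have l4 : ∑ k, ∑ j, W k j * W k j = n * (x ⬝ᵥ x) ^ 2 := by
    rw [hWsum]
    have : ∀ r, ∑ k, ∑ j, W k j * ((A r *ᵥ x) k * (A r *ᵥ x) j) = (x ⬝ᵥ x) ^ 2 := by
      intro r
      simp only [mul_comm (W _ _)]
      rw [hWsum]
      have : ∀ r', ∑ k, ∑ j, ((A r *ᵥ x) k * (A r *ᵥ x) j) * ((A r' *ᵥ x) k * (A r' *ᵥ x) j)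
          = ((A r *ᵥ x) ⬝ᵥ (A r' *ᵥ x)) ^ 2 := by
        intro r'
        simp only [sq, dotProduct, Finset.sum_mul_sum]
        exact Finset.sum_congr rfl fun _ _ => Finset.sum_congr rfl fun _ _ => by ring
      simp only [this, hA.dot_mulVec]
      simp
    simp [this]
  have l5 : ∑ k, ∑ j, δ k j * (x k * x j) = x ⬝ᵥ x := by
    simp [hδ, dotProduct]
  have lJ : ∀ y : Fin m → ℝ, ∑ k, ∑ j, y j * (Jm A t j k * y k) = 0 := by
    intro y
    rw [← dot_mulVec_self (Jm_transpose hA t) y, Finset.sum_comm]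
    simp only [dotProduct, mulVec, Finset.mul_sum]
  have l7 : ∑ k, ∑ j, x k * x j * W k j = 0 := by
    rw [hWsum]
    refine Finset.sum_eq_zero fun r _ => ?_
    have : ∑ k, ∑ j, x k * x j * ((A r *ᵥ x) k * (A r *ᵥ x) j) = (x ⬝ᵥ (A r *ᵥ x)) ^ 2 := by
      simp only [sq, dotProduct, Finset.sum_mul_sum]
      exact Finset.sum_congr rfl fun _ _ => Finset.sum_congr rfl fun _ _ => by ring
    rw [this, dot_mulVec_self (hA.1 r)]
    norm_num
  have l8 : ∑ k, ∑ j, δ k j * Jm A t j k = 0 := by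
    have : ∀ k, Jm A t k k = 0 := fun k => by
      have h := congrFun (congrFun (Jm_transpose hA t) k) k
      simp only [transpose_apply, Matrix.neg_apply] at h
      linarith
    simp [hδ, this]
  have l9 : ∑ k, ∑ j, δ k j * W k j = n * (x ⬝ᵥ x) := by
    rw [hWsum]
    have : ∀ r, ∑ k, ∑ j, δ k j * ((A r *ᵥ x) k * (A r *ᵥ x) j) = x ⬝ᵥ x := by
      intro r
      have h := hA.dot_mulVec x r r
      rw [if_pos rfl] at h
      rw [← h]
      simp [hδ, dotProduct]
    simp [this]
  have l10 : ∑ k, ∑ j, Jm A t j k * W k j = 0 := by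
    rw [hWsum (fun k j => Jm A t j k)]
    refine Finset.sum_eq_zero fun r _ => ?_
    rw [← lJ (A r *ᵥ x)]
    exact Finset.sum_congr rfl fun _ _ => Finset.sum_congr rfl fun _ _ => by ring
  have l6 := lJ x
  have key : ∑ k, ∑ j, ((1/2) * (x k * x j) + s * δ k j + Jm A t j k - (1/2) * W k j) ^ 2
      = (1/4) * ∑ k, ∑ j, (x k * x k) * (x j * x j) + s ^ 2 * ∑ k, ∑ j, δ k j
        + ∑ k, ∑ j, Jm A t j k ^ 2 + (1/4) * ∑ k, ∑ j, W k j * W k j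
        + s * ∑ k, ∑ j, δ k j * (x k * x j) + ∑ k, ∑ j, x j * (Jm A t j k * x k)
        - (1/2) * ∑ k, ∑ j, x k * x j * W k j + 2 * s * ∑ k, ∑ j, δ k j * Jm A t j k
        - s * ∑ k, ∑ j, δ k j * W k j - ∑ k, ∑ j, Jm A t j k * W k j := by
    simp only [e, Finset.mul_sum, Finset.sum_add_distrib, Finset.sum_sub_distrib]
  rw [l1, l2, l3, l4, l5, lJ x, l7, l8, l9, l10] at key
  refine key.trans ?_
  ring

/-- `∑ |∇f_i|² = |∇D|² + m D`, which amounts to `∑ |∇ω_i|² = m / D`. -/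
lemma sum_Fd_sq (hA : IsHType m n A) (p : Pt m n) :
    ∑ k, ∑ i, Fd m n A k p i ^ 2 = ∑ k, Dd m n A k p ^ 2 + m * Df m n p := by
  have h2 := dot_mulVec_self (Jm_transpose hA p.2) p.1
  have h3 := Jm_dot hA p.2 p.1
  have h4 : ∀ a b : ℝ, ∑ j, (a * p.1 j - b * (Jm A p.2 *ᵥ p.1) j) ^ 2
      = a ^ 2 * (p.1 ⬝ᵥ p.1) + b ^ 2 * ((∑ r, p.2 r ^ 2) * (p.1 ⬝ᵥ p.1)) := by
    intro a b
    have : a ^ 2 * (p.1 ⬝ᵥ p.1) + b ^ 2 * ((∑ r, p.2 r ^ 2) * (p.1 ⬝ᵥ p.1))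
      = a ^ 2 * (p.1 ⬝ᵥ p.1) - 2 * a * b * (p.1 ⬝ᵥ (Jm A p.2 *ᵥ p.1))
        + b ^ 2 * ((Jm A p.2 *ᵥ p.1) ⬝ᵥ (Jm A p.2 *ᵥ p.1)) := by
      rw [h2, h3]; ring
    rw [this]
    simp only [dotProduct, Finset.mul_sum, ← Finset.sum_add_distrib, ← Finset.sum_sub_distrib]
    exact Finset.sum_congr rfl fun i _ => by ring
  have h5 : ∑ k, Dd m n A k p ^ 2 = (1 + (p.1 ⬝ᵥ p.1) / 4) ^ 2 * (p.1 ⬝ᵥ p.1)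
      + (∑ r, p.2 r ^ 2) * (p.1 ⬝ᵥ p.1) := by
    have := h4 (1 + (p.1 ⬝ᵥ p.1) / 4) 1
    simp only [one_mul, one_pow] at this
    rw [← this]
    simp only [Dd, sum_sq_eq_dot]
  have h6 : ∑ k, ((Jm A p.2 *ᵥ p.1) k - (p.1 ⬝ᵥ p.1) / 4 * p.1 k) ^ 2
      = ((p.1 ⬝ᵥ p.1) / 4) ^ 2 * (p.1 ⬝ᵥ p.1) + (∑ r, p.2 r ^ 2) * (p.1 ⬝ᵥ p.1) := by
    have := h4 (-((p.1 ⬝ᵥ p.1) / 4)) (-1)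
    calc _ = _ := Finset.sum_congr rfl fun k _ => by ring
      _ = _ := this
      _ = _ := by ring
  have h7 : ∑ k, ∑ r, (-(A r *ᵥ p.1) k) ^ 2 = n * (p.1 ⬝ᵥ p.1) := by
    rw [Finset.sum_comm]
    have : ∀ r, ∑ k, (-(A r *ᵥ p.1) k) ^ 2 = p.1 ⬝ᵥ p.1 := fun r => by
      have h := hA.dot_mulVec p.1 r r
      rw [if_pos rfl] at h
      simp only [neg_sq, sum_sq_eq_dot, h]
    simp only [this, Finset.sum_const, Finset.card_univ, Fintype.card_fin, nsmul_eq_mul]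
  rw [h5]
  simp only [Fintype.sum_sum_type, Fd, Finset.sum_add_distrib, Finset.univ_unique,
    Finset.sum_singleton, frobenius_first hA, h7, sum_sq_eq_dot p.1, h6, Df]
  ring

/-- The pointwise identity `∑ |∇(u ω_i)|² = |∇u|² + m u² / D`. -/
lemma pointwise (hA : IsHType m n A) (u : Pt m n → ℝ) (p : Pt m n)
    (hu : DifferentiableAt ℝ u p) :
    ∑ i, gradSq m n A (fun q => u q * (Ff m n A i q / Df m n q)) p
      = gradSq m n A u p + m * (u p ^ 2 / Df m n p) := by
  have hD := (Df_pos p).ne'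
  have h1 : ∀ i k, Xvf m n A k (fun q => u q * (Ff m n A i q / Df m n q)) p
      = Xvf m n A k u p * (Ff m n A i p / Df m n p) + u p * (Fd m n A k p i / Df m n p
          - Ff m n A i p * Dd m n A k p / Df m n p ^ 2) := fun i k =>
    ((hasX_of_differentiableAt hu).mul ((hasX_Ff hA k p i).div (hasX_Df hA k p) hD)).2
  simp only [gradSq, h1]
  rw [Finset.sum_comm]
  set D := Df m n p
  have h2 : ∀ k, ∑ i, (Xvf m n A k u p * (Ff m n A i p / D) + u p * (Fd m n A k p i / D
          - Ff m n A i p * Dd m n A k p / D ^ 2)) ^ 2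
      = Xvf m n A k u p ^ 2 + u p ^ 2 / D ^ 2 *
          (∑ i, Fd m n A k p i ^ 2 - Dd m n A k p ^ 2) := by
    intro k
    set a := Xvf m n A k u p
    set b := u p
    set d := Dd m n A k p
    have e : ∀ i, (a * (Ff m n A i p / D) + b * (Fd m n A k p i / D
          - Ff m n A i p * d / D ^ 2)) ^ 2
        = (a / D - b * d / D ^ 2) ^ 2 * Ff m n A i p ^ 2
          + 2 * (a / D - b * d / D ^ 2) * (b / D) * (Ff m n A i p * Fd m n A k p i)
          + (b / D) ^ 2 * Fd m n A k p i ^ 2 := fun i => by ring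
    simp only [e, Finset.sum_add_distrib, ← Finset.mul_sum, sum_Ff_sq hA, sum_Ff_Fd hA]
    change (a / D - b * d / D ^ 2) ^ 2 * D ^ 2
      + 2 * (a / D - b * d / D ^ 2) * (b / D) * (D * d) + _ = _
    field_simp
    ring
  simp only [h2, Finset.sum_add_distrib, ← Finset.mul_sum, Finset.sum_sub_distrib,
    sum_Fd_sq hA]
  change _ + u p ^ 2 / D ^ 2 * (_ + m * D - _) = _
  field_simp
  ring

end conformal

/-! ### Integration -/

section integration

variable {m n : ℕ} {A : Fin n → Matrix (Fin m) (Fin m) ℝ}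

lemma integrable_gradSq {v : Pt m n → ℝ} (hv : ContDiff ℝ 1 v) (hs : HasCompactSupport v) :
    Integrable (gradSq m n A v) := by
  have hc : Continuous (fderiv ℝ v) := hv.continuous_fderiv one_ne_zero
  refine Continuous.integrable_of_hasCompactSupport ?_ ?_
  · unfold gradSq Xvf
    fun_prop
  · refine (hs.fderiv (𝕜 := ℝ)).mono fun p hp => ?_
    contrapose! hp
    have h0 : fderiv ℝ v p = 0 := by simpa using hp
    simp [gradSq, Xvf, h0]

lemma contDiff_Df : ContDiff ℝ 1 (Df m n) := by
  unfold Df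
  fun_prop

lemma contDiff_Ff (i : Fin m ⊕ Fin n ⊕ Unit) : ContDiff ℝ 1 (Ff m n A i) := by
  rcases i with j | r | _ <;> simp only [Ff] <;> fun_prop

lemma Uf_rpow_s14 (hn : 1 ≤ n) (hm : 1 ≤ m) (p : Pt m n) :
    Uf m n p ^ (4 / (Qh m n - 2)) = (Df m n p)⁻¹ := by
  have hQ : Qh m n - 2 ≠ 0 := by
    have h1 : (1 : ℝ) ≤ n := by exact_mod_cast hn
    have h2 : (1 : ℝ) ≤ m := by exact_mod_cast hm
    unfold Qh
    linarith
  change (Df m n p ^ (-(Qh m n - 2) / 4)) ^ (4 / (Qh m n - 2)) = _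
  rw [← rpow_mul (Df_pos p).le, ← rpow_neg_one]
  congr 1
  field_simp

end integration

/-- **Lemma 3.4**:
`∑_{i=1}^{m+n+1} ∫ |∇_G(u ω_i)|² = ∫ |∇_G u|² + m ∫ u²/((1+|x|²/4)²+|t|²)`. -/
theorem sum_gradients_identity (m n : ℕ) (hm : 1 ≤ m) (hn : 1 ≤ n)
    (A : Fin n → Matrix (Fin m) (Fin m) ℝ) (hA : IsHType m n A)
    (u : Pt m n → ℝ) (hu : ContDiff ℝ (⊤ : ℕ∞) u) (hsupp : HasCompactSupport u) :
    (∑ j : Fin m, ∫ q : Pt m n, gradSq m n A (fun x => u x * om1 m n A j x) q)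
      + (∑ r : Fin n, ∫ q : Pt m n, gradSq m n A (fun x => u x * om2 m n r x) q)
      + (∫ q : Pt m n, gradSq m n A (fun x => u x * om3 m n x) q)
      = (∫ q : Pt m n, gradSq m n A u q)
        + (m : ℝ) *
            ∫ q : Pt m n, u q ^ 2 / ((1 + (∑ i, q.1 i ^ 2) / 4) ^ 2 + ∑ r, q.2 r ^ 2) := by
  have hu1 : ContDiff ℝ 1 u := hu.of_le (by exact_mod_cast le_top)
  have e1 : ∀ j, om1 m n A j = fun p => Ff m n A (.inl j) p / Df m n p := fun j => by
    funext p
    rw [om1, Uf_rpow_s14 hn hm, inv_mul_eq_div]; rfl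
  have e2 : ∀ r, om2 m n r = fun p => Ff m n A (.inr (.inl r)) p / Df m n p := fun r => by
    funext p
    rw [om2, Uf_rpow_s14 hn hm, Ff]; ring
  have e3 : om3 m n = fun p => Ff m n A (.inr (.inr ())) p / Df m n p := by
    funext p
    rw [om3, Uf_rpow_s14 hn hm, inv_mul_eq_div]; rfl
  have hint : ∀ i, Integrable
      (gradSq m n A (fun q => u q * (Ff m n A i q / Df m n q))) := fun i =>
    integrable_gradSq (hu1.mul ((contDiff_Ff i).div contDiff_Df fun p => (Df_pos p).ne'))
      hsupp.mul_right
  have hL : (∑ j : Fin m, ∫ q : Pt m n, gradSq m n A (fun x => u x * om1 m n A j x) q)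
      + (∑ r : Fin n, ∫ q : Pt m n, gradSq m n A (fun x => u x * om2 m n r x) q)
      + (∫ q : Pt m n, gradSq m n A (fun x => u x * om3 m n x) q)
      = ∑ i, ∫ q : Pt m n, gradSq m n A (fun q => u q * (Ff m n A i q / Df m n q)) q := by
    simp only [e1, e2, e3, Fintype.sum_sum_type, Finset.univ_unique, Finset.sum_singleton]
    rw [add_assoc]
  have hu2 : Integrable (fun q : Pt m n => u q ^ 2 / Df m n q) := by
    refine Continuous.integrable_of_hasCompactSupport ?_ ?_
    · exact (hu.continuous.pow 2).div contDiff_Df.continuous fun p => (Df_pos p).ne'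
    · refine hsupp.mono fun p hp => ?_
      contrapose! hp
      have h0 : u p = 0 := by simpa using hp
      simp [h0]
  rw [hL, ← integral_finsetSum _ fun i _ => hint i]
  simp only [pointwise hA u _ (hu1.differentiable one_ne_zero _)]
  rw [integral_add (integrable_gradSq hu1 hsupp) (hu2.const_mul _), integral_const_mul]
  rfl
end
end
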